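/- Let n ≥ 1 and T > 0. Let g = (g^{αβ}) be a C¹ field of symmetric positive definite n×n matrices on an open neighborhood of [−T,T] × ℝⁿ, let φ : ℝⁿ → ℝ be Lipschitz with −T < φ(x) < T for all x, let b⁰, b¹,…,bⁿ, c, f : [−T,T] × ℝⁿ → ℝ be continuous, and let v be C² on a neighborhood of [−T,T] × ℝⁿ, vanishing for |x| ≥ R for some R > 0, and satisfying ∂_t²v − Σ g^{αβ}∂_α∂_β v + b⁰∂_t v + Σ b^α∂_α v + c v = f on [−T,T] × ℝⁿ. Then for every t ∈ (−T, T], writing D_t = {x ∈ ℝⁿ : φ(x) < t}: ∫_{D_t} [(∂_t v)² + Σ g^{αβ}∂_α v ∂_β v + v²](t,x) dx = ∫_{D_t} [(∂_t v)²·(1 − Σ g^{αβ}∂_αφ∂_βφ) + Σ g^{αβ}(∂_α v + ∂_αφ·∂_t v)(∂_β v + ∂_βφ·∂_t v) + v²](φ(x),x) dx − ∫∫_{{(s,x) : φ(x) < s < t}} [2∂_s v·(b⁰∂_s v + Σ b^α∂_α v + c v) + 2Σ ∂_α(g^{αβ})·∂_s v ∂_β v − Σ (∂_s g^{αβ})·∂_α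 v ∂_β v − 2v∂_s v − 2f∂_s v] ds dx. -/

import Mathlib

open MeasureTheory

/-- Time partial derivative `∂_t u` of a function on `ℝ × ℝⁿ`. -/
noncomputable def Dt {n : ℕ} (u : ℝ × (Fin n → ℝ) → ℝ) (p : ℝ × (Fin n → ℝ)) : ℝ :=
  fderiv ℝ u p (1, 0)

/-- Spatial partial derivative `∂_α u` of a function on `ℝ × ℝⁿ`. -/
noncomputable def Dx {n : ℕ} (α : Fin n) (u : ℝ × (Fin n → ℝ) → ℝ)
    (p : ℝ × (Fin n → ℝ)) : ℝ :=
  fderiv ℝ u p (0, Pi.single α 1)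

/-!
The energy current with time component `energyDensity g v` and spatial components
`-energyFlux g v α` has a divergence which, by the wave equation and the symmetry of `g`, involves
no second derivatives of `v`. It remains to integrate this divergence between a Lipschitz graph and
a time slice. The derivative of a compactly supported `C¹` function along the tangent vector
`(∂_w φ, w)` of the graph integrates to zero over every vertical translate of the graph, being the
derivative of a Lipschitz function almost everywhere, so horizontal derivatives integrate like
`-∂_w φ` times vertical ones, and the latter are handled by the fundamental theorem of calculus on
vertical lines. The region between the graph and the slice is the difference of the regions above
the Lipschitz graphs of `min φ t` and `t`, whose boundary terms cancel where `t ≤ φ`.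
-/

section AboveGraph

lemma measurableSet_between_graph_and_slice {X : Type*} [MeasurableSpace X] {φ : X → ℝ}
    (hφ : Measurable φ) (t : ℝ) : MeasurableSet {p : ℝ × X | φ p.2 < p.1 ∧ p.1 < t} :=
  (measurableSet_lt (hφ.comp measurable_snd) measurable_fst).inter
    (measurableSet_lt measurable_fst measurable_const)

lemma setIntegral_between_graph_and_slice {X F : Type*} [MeasurableSpace X] {μ : Measure X}
    [NormedAddCommGroup F] [NormedSpace ℝ F] {f : ℝ × X → F} (hf : Integrable f (volume.prod μ))
    (φ : X → ℝ) (t : ℝ) :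
    ∫ p in {p : ℝ × X | φ p.2 < p.1 ∧ p.1 < t}, f p ∂volume.prod μ
      = (∫ p in {p : ℝ × X | min (φ p.2) t < p.1}, f p ∂volume.prod μ)
        - ∫ p in {p : ℝ × X | t < p.1}, f p ∂volume.prod μ := by
  have hmeas : MeasurableSet {p : ℝ × X | t < p.1} :=
    measurableSet_lt measurable_const measurable_fst
  have hsub : {p : ℝ × X | t < p.1} ⊆ {p | min (φ p.2) t < p.1} :=
    fun p hp => (min_le_right (φ p.2) t).trans_lt hp
  rw [← setIntegral_sdiff hmeas hf.integrableOn hsub]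
  refine setIntegral_congr_set ?_
  filter_upwards [Measure.quasiMeasurePreserving_fst.ae (Measure.ae_ne volume t)] with p hp
  refine propext (?_ : (φ p.2 < p.1 ∧ p.1 < t) ↔ min (φ p.2) t < p.1 ∧ ¬t < p.1)
  grind

variable {X : Type*} [MeasurableSpace X] {μ : Measure X} [SFinite μ] {φ : X → ℝ}

lemma measurePreserving_shear (hφ : Measurable φ) :
    MeasurePreserving (fun q : ℝ × X => (φ q.2 + q.1, q.2)) (volume.prod μ) (volume.prod μ) :=
  Measure.measurePreserving_swap.comp <|
    ((MeasurePreserving.id μ).skew_product (g := fun x s => φ x + s)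
      ((hφ.comp measurable_fst).add measurable_snd)
      (ae_of_all _ fun x => map_add_left_eq_self volume (φ x))).comp
    Measure.measurePreserving_swap

lemma integrableOn_comp_shear {F : Type*} [NormedAddCommGroup F] {f : ℝ × X → F}
    (hφ : Measurable φ) (hf : Integrable f (volume.prod μ)) (s : Set (ℝ × X)) :
    IntegrableOn (fun q : ℝ × X => f (φ q.2 + q.1, q.2)) s (volume.prod μ) :=
  ((measurePreserving_shear hφ).integrable_comp_of_integrable hf).integrableOn

variable {F : Type*} [NormedAddCommGroup F] [NormedSpace ℝ F] {f : ℝ × X → F}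

lemma setIntegral_above_graph_eq_shear (hφ : Measurable φ)
    (hf : AEStronglyMeasurable f (volume.prod μ)) :
    ∫ p in {p : ℝ × X | φ p.2 < p.1}, f p ∂volume.prod μ
      = ∫ q in Set.Ioi (0 : ℝ) ×ˢ (Set.univ : Set X), f (φ q.2 + q.1, q.2) ∂volume.prod μ := by
  have hshear := measurePreserving_shear (μ := μ) hφ
  have hpre : (fun q : ℝ × X => (φ q.2 + q.1, q.2)) ⁻¹' {p | φ p.2 < p.1}
      = Set.Ioi 0 ×ˢ Set.univ := by
    ext q; simp
  have hmeas : MeasurableSet {p : ℝ × X | φ p.2 < p.1} :=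
    measurableSet_lt (hφ.comp measurable_snd) measurable_fst
  rw [← hpre, ← setIntegral_map hmeas (by rwa [hshear.map_eq]) hshear.aemeasurable, hshear.map_eq]

lemma setIntegral_above_graph (hφ : Measurable φ) (hf : Integrable f (volume.prod μ)) :
    ∫ p in {p : ℝ × X | φ p.2 < p.1}, f p ∂volume.prod μ
      = ∫ s in Set.Ioi 0, ∫ x, f (φ x + s, x) ∂μ := by
  rw [setIntegral_above_graph_eq_shear hφ hf.aestronglyMeasurable,
    setIntegral_prod _ (integrableOn_comp_shear hφ hf _), Measure.restrict_univ]

lemma setIntegral_above_graph_symm (hφ : Measurable φ) (hf : Integrable f (volume.prod μ)) :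
    ∫ p in {p : ℝ × X | φ p.2 < p.1}, f p ∂volume.prod μ
      = ∫ x, (∫ s in Set.Ioi 0, f (φ x + s, x)) ∂μ := by
  rw [setIntegral_above_graph_eq_shear hφ hf.aestronglyMeasurable, ← setIntegral_prod_swap]
  simpa only [Measure.restrict_univ] using! setIntegral_prod _
    (integrableOn_comp_shear hφ hf (Set.Ioi 0 ×ˢ Set.univ)).swap

end AboveGraph

lemma hasCompactSupport_comp_graph {X F : Type*} [TopologicalSpace X] [R1Space X] [Zero F]
    {f : ℝ × X → F} (hf : HasCompactSupport f) (φ : X → ℝ) :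
    HasCompactSupport fun x => f (φ x, x) :=
  .of_support_subset_isCompact (hf.isCompact.image continuous_snd) fun x hx =>
    ⟨(φ x, x), subset_tsupport f hx, rfl⟩

lemma integrable_comp_graph {X F : Type*} [TopologicalSpace X] [R1Space X] [MeasurableSpace X]
    [OpensMeasurableSpace X] {μ : Measure X} [IsFiniteMeasureOnCompacts μ] [NormedAddCommGroup F]
    {f : ℝ × X → F} {φ : X → ℝ} (hφ : Continuous φ) (hf : Continuous f)
    (hfc : HasCompactSupport f) : Integrable (fun x => f (φ x, x)) μ :=
  (hf.comp (hφ.prodMk continuous_id)).integrable_of_hasCompactSupport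
    (hasCompactSupport_comp_graph hfc φ)

section Directional

variable {E : Type*} [NormedAddCommGroup E] [NormedSpace ℝ E] {φ Z : E → ℝ} {t : ℝ} {x : E}

lemma fderiv_min_const_of_lt (hφ : ContinuousAt φ x) (hx : φ x < t) :
    fderiv ℝ (fun y => min (φ y) t) x = fderiv ℝ φ x :=
  Filter.EventuallyEq.fderiv_eq <|
    (hφ.eventually_lt_const hx).mono fun _ hy => min_eq_left hy.le

lemma fderiv_min_const_of_le (hx : t ≤ φ x) : fderiv ℝ (fun y => min (φ y) t) x = 0 :=
  IsLocalMax.fderiv_eq_zero <| .of_forall fun y => by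
    simpa only [min_eq_right hx] using min_le_right (φ y) t

variable [MeasurableSpace E] [OpensMeasurableSpace E]

lemma integrable_fderiv_apply_mul {X : Type*} [MeasurableSpace X] {ν : Measure X} {K : NNReal}
    (hφ : LipschitzWith K φ) (w : E) {π : X → E} (hπ : Measurable π) {h : X → ℝ}
    (hh : Integrable h ν) : Integrable (fun x => fderiv ℝ φ (π x) w * h x) ν :=
  hh.bdd_mul ((measurable_fderiv_apply_const ℝ φ w).comp hπ).aestronglyMeasurable
    (ae_of_all _ fun x => (fderiv ℝ φ (π x)).le_of_opNorm_le (norm_fderiv_le_of_lipschitz ℝ hφ) w)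

lemma integrable_fderiv_apply_mul_comp_graph {μ : Measure E} [IsFiniteMeasureOnCompacts μ]
    {K : NNReal} {Z : ℝ × E → ℝ} (hφ : LipschitzWith K φ) (hZ : Continuous Z)
    (hZc : HasCompactSupport Z) (w : E) : Integrable (fun x => fderiv ℝ φ x w * Z (φ x, x)) μ :=
  integrable_fderiv_apply_mul hφ w measurable_id (integrable_comp_graph hφ.continuous hZ hZc)

lemma integrable_fderiv_apply {μ : Measure E} [IsFiniteMeasureOnCompacts μ]
    (hZ : ContDiff ℝ 1 Z) (hZc : HasCompactSupport Z) (w : E) :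
    Integrable (fun p => fderiv ℝ Z p w) μ :=
  ((hZ.continuous_fderiv one_ne_zero).clm_apply continuous_const).integrable_of_hasCompactSupport
    (hZc.fderiv_apply ℝ w)

end Directional

section LipschitzGraph

lemma clm_apply_prodMk {E : Type*} [NormedAddCommGroup E] [NormedSpace ℝ E]
    (L : ℝ × E →L[ℝ] ℝ) (τ : ℝ) (w : E) : L (τ, w) = τ * L (1, 0) + L (0, w) := by
  rw [← smul_eq_mul, ← map_smul, ← map_add]
  simp

lemma integral_Ioi_fderiv_vertical {E : Type*} [NormedAddCommGroup E] [NormedSpace ℝ E]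
    {Z : ℝ × E → ℝ} (hZ : ContDiff ℝ 1 Z) (hZc : HasCompactSupport Z) (a : ℝ) (x : E) :
    ∫ s in Set.Ioi 0, fderiv ℝ Z (a + s, x) (1, 0) = -Z (a, x) := by
  have hline (s : ℝ) : HasDerivAt (fun s => (a + s, x)) ((1 : ℝ), (0 : E)) s :=
    ((hasDerivAt_id s).const_add a).prodMk (hasDerivAt_const s x)
  have hderiv (s : ℝ) : deriv (fun s => Z (a + s, x)) s = fderiv ℝ Z (a + s, x) (1, 0) :=
    ((hZ.differentiable one_ne_zero _).hasFDerivAt.comp_hasDerivAt s (hline s)).deriv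
  have hsupp : HasCompactSupport fun s => Z (a + s, x) :=
    .of_support_subset_isCompact (hZc.isCompact.image (continuous_fst.sub continuous_const))
      fun s hs => ⟨(a + s, x), subset_tsupport Z hs, add_sub_cancel_left a s⟩
  simpa only [hderiv, add_zero] using hsupp.integral_Ioi_deriv_eq (by fun_prop) 0

lemma setIntegral_above_graph_mul_fderiv_vertical {E : Type*} [NormedAddCommGroup E]
    [NormedSpace ℝ E] [MeasurableSpace E] {μ : Measure E} [SFinite μ] {φ : E → ℝ} {Z : ℝ × E → ℝ}
    (hφ : Measurable φ) (hZ : ContDiff ℝ 1 Z) (hZc : HasCompactSupport Z) {h : E → ℝ}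
    (hint : Integrable (fun p => h p.2 * fderiv ℝ Z p (1, 0)) (volume.prod μ)) :
    ∫ p in {p : ℝ × E | φ p.2 < p.1}, h p.2 * fderiv ℝ Z p (1, 0) ∂volume.prod μ
      = -∫ x, h x * Z (φ x, x) ∂μ := by
  rw [setIntegral_above_graph_symm hφ hint, ← integral_neg]
  simp only [integral_const_mul, integral_Ioi_fderiv_vertical hZ hZc, mul_neg]

variable {E : Type*} [NormedAddCommGroup E] [NormedSpace ℝ E] [FiniteDimensional ℝ E]
  [MeasurableSpace E] [BorelSpace E] {μ : Measure E} [μ.IsAddHaarMeasure] {φ : E → ℝ} {K : NNReal}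
  {Z : ℝ × E → ℝ}

lemma integral_lineDeriv_eq_zero {G : E → ℝ} (hG : LipschitzWith K G) (hGc : HasCompactSupport G)
    (w : E) : ∫ x, lineDeriv ℝ G x w ∂μ = 0 := by
  have hone : LipschitzWith 0 fun _ : E => (1 : ℝ) := .const 1
  simpa [lineDeriv] using (hone.integral_lineDeriv_mul_eq (μ := μ) hG hGc (-w)).symm

lemma integral_fderiv_tangent_graph_eq_zero (hφ : LipschitzWith K φ) (hZ : ContDiff ℝ 1 Z)
    (hZc : HasCompactSupport Z) (w : E) :
    ∫ x, fderiv ℝ Z (φ x, x) (fderiv ℝ φ x w, w) ∂μ = 0 := by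
  obtain ⟨C, hC⟩ := hZ.lipschitzWith_of_hasCompactSupport hZc one_ne_zero
  rw [← integral_lineDeriv_eq_zero (μ := μ) (hC.comp (hφ.prodMk .id))
    (hasCompactSupport_comp_graph hZc φ) w]
  refine integral_congr_ae ?_
  filter_upwards [hφ.ae_differentiableAt (μ := μ)] with x hx
  have hgraph : HasFDerivAt (fun y => (φ y, y)) _ x := hx.hasFDerivAt.prodMk (hasFDerivAt_id x)
  have hchain := (hZ.differentiable one_ne_zero (φ x, x)).hasFDerivAt.comp (f := fun y => (φ y, y))
    x hgraph
  exact (hchain.hasLineDerivAt w).lineDeriv.symm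

lemma setIntegral_above_graph_fderiv (hφ : LipschitzWith K φ) (hZ : ContDiff ℝ 1 Z)
    (hZc : HasCompactSupport Z) (τ : ℝ) (w : E) :
    ∫ p in {p : ℝ × E | φ p.2 < p.1}, fderiv ℝ Z p (τ, w) ∂volume.prod μ
      = ∫ x, (fderiv ℝ φ x w - τ) * Z (φ x, x) ∂μ := by
  have hint (d : ℝ × E) : Integrable (fun p => fderiv ℝ Z p d) (volume.prod μ) :=
    integrable_fderiv_apply hZ hZc d
  have hint_mul : Integrable (fun p => (fderiv ℝ φ p.2 w - τ) * fderiv ℝ Z p (1, 0))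
      (volume.prod μ) := by
    simp only [sub_mul]
    exact (integrable_fderiv_apply_mul hφ w measurable_snd (hint _)).sub ((hint _).const_mul τ)
  have hsplit (p : ℝ × E) : fderiv ℝ Z p (fderiv ℝ φ p.2 w, w)
      = fderiv ℝ Z p (τ, w) + (fderiv ℝ φ p.2 w - τ) * fderiv ℝ Z p (1, 0) := by
    rw [clm_apply_prodMk _ (fderiv ℝ φ p.2 w), clm_apply_prodMk _ τ]
    ring
  have htangent : ∫ p in {p : ℝ × E | φ p.2 < p.1},
      fderiv ℝ Z p (fderiv ℝ φ p.2 w, w) ∂volume.prod μ = 0 := by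
    rw [setIntegral_above_graph hφ.continuous.measurable
      (((hint (τ, w)).add hint_mul).congr (ae_of_all _ fun p => (hsplit p).symm))]
    have htranslate (s : ℝ) :
        ∫ x, fderiv ℝ Z (φ x + s, x) (fderiv ℝ φ x w, w) ∂μ = 0 := by
      have hφs : LipschitzWith K fun x => φ x + s := fun x y => by simpa using hφ x y
      simpa only [fderiv_add_const] using integral_fderiv_tangent_graph_eq_zero hφs hZ hZc w
    simp only [htranslate, integral_zero]
  simp only [hsplit] at htangent
  rw [integral_add (hint _).integrableOn hint_mul.integrableOn,
    setIntegral_above_graph_mul_fderiv_vertical (h := fun x => fderiv ℝ φ x w - τ)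
      hφ.continuous.measurable hZ hZc hint_mul] at htangent
  linarith

lemma setIntegral_between_graph_and_slice_fderiv (hφ : LipschitzWith K φ) (hZ : ContDiff ℝ 1 Z)
    (hZc : HasCompactSupport Z) (t τ : ℝ) (w : E) :
    ∫ p in {p : ℝ × E | φ p.2 < p.1 ∧ p.1 < t}, fderiv ℝ Z p (τ, w) ∂volume.prod μ
      = ∫ x in {x | φ x < t}, (τ * Z (t, x) + (fderiv ℝ φ x w - τ) * Z (φ x, x)) ∂μ := by
  have hint {ψ : E → ℝ} {K} (hψ : LipschitzWith K ψ) :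
      Integrable (fun x => (fderiv ℝ ψ x w - τ) * Z (ψ x, x)) μ := by
    simp only [sub_mul]
    exact (integrable_fderiv_apply_mul_comp_graph hψ hZ.continuous hZc w).sub
      ((integrable_comp_graph hψ.continuous hZ.continuous hZc).const_mul τ)
  have hmin := hφ.min_const t
  have hconst : LipschitzWith 0 fun _ : E => t := .const t
  rw [setIntegral_between_graph_and_slice (integrable_fderiv_apply hZ hZc _) φ t,
    setIntegral_above_graph_fderiv hmin hZ hZc, setIntegral_above_graph_fderiv hconst hZ hZc,
    ← integral_sub (hint hmin) (hint hconst),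
    ← integral_indicator (measurableSet_lt hφ.continuous.measurable measurable_const)]
  congr with x
  by_cases hx : φ x < t
  · rw [Set.indicator_of_mem (s := {x | φ x < t}) hx, min_eq_left hx.le,
      fderiv_min_const_of_lt hφ.continuous.continuousAt hx, fderiv_fun_const]
    simp only [Pi.zero_apply, zero_apply]
    ring
  · rw [Set.indicator_of_notMem (s := {x | φ x < t}) hx, min_eq_right (not_lt.1 hx),
      fderiv_min_const_of_le (not_lt.1 hx), fderiv_fun_const, Pi.zero_apply, sub_self]

lemma setIntegral_between_graph_and_slice_divergence {ι : Type*} [Fintype ι] {e : ℝ × E → ℝ}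
    {P : ι → ℝ × E → ℝ} (hφ : LipschitzWith K φ) (he : ContDiff ℝ 1 e) (hec : HasCompactSupport e)
    (hP : ∀ i, ContDiff ℝ 1 (P i)) (hPc : ∀ i, HasCompactSupport (P i)) (t : ℝ) (w : ι → E) :
    ∫ p in {p : ℝ × E | φ p.2 < p.1 ∧ p.1 < t},
        (fderiv ℝ e p (1, 0) - ∑ i, fderiv ℝ (P i) p (0, w i)) ∂volume.prod μ
      = (∫ x in {x | φ x < t}, e (t, x) ∂μ)
        - ∫ x in {x | φ x < t}, (e (φ x, x) + ∑ i, fderiv ℝ φ x (w i) * P i (φ x, x)) ∂μ := by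
  have hint_slice : Integrable (fun x => e (t, x)) μ :=
    integrable_comp_graph continuous_const he.continuous hec
  have hint_graph : Integrable (fun x => e (φ x, x)) μ :=
    integrable_comp_graph hφ.continuous he.continuous hec
  have hint_flux (i : ι) : Integrable (fun x => fderiv ℝ φ x (w i) * P i (φ x, x)) μ :=
    integrable_fderiv_apply_mul_comp_graph hφ (hP i).continuous (hPc i) (w i)
  have hint_div (i : ι) : IntegrableOn (fun p => fderiv ℝ (P i) p (0, w i))
      {p : ℝ × E | φ p.2 < p.1 ∧ p.1 < t} (volume.prod μ) :=
    (integrable_fderiv_apply (hP i) (hPc i) _).integrableOn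
  rw [integral_sub (integrable_fderiv_apply he hec _).integrableOn
      (integrable_finsetSum _ fun i _ => hint_div i),
    integral_finsetSum _ fun i _ => hint_div i,
    integral_add hint_graph.integrableOn
      (integrable_finsetSum _ fun i _ => (hint_flux i).integrableOn),
    integral_finsetSum _ fun i _ => (hint_flux i).integrableOn, ← sub_sub]
  congr 1
  · rw [setIntegral_between_graph_and_slice_fderiv hφ he hec,
      ← integral_sub hint_slice.integrableOn hint_graph.integrableOn]
    simp only [map_zero, one_mul, zero_sub, neg_one_mul, ← sub_eq_add_neg]
  · refine Finset.sum_congr rfl fun i _ => ?_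
    simp only [setIntegral_between_graph_and_slice_fderiv hφ (hP i) (hPc i), zero_mul, zero_add,
      sub_zero]

lemma exists_contDiff_hasCompactSupport_eventuallyEq {E F : Type*} [NormedAddCommGroup E]
    [NormedSpace ℝ E] [FiniteDimensional ℝ E] [NormedAddCommGroup F] [NormedSpace ℝ F] {k : ℕ∞}
    {U S C : Set E} {f : E → F} (hU : IsOpen U) (hSU : S ⊆ U) (hC : IsClosed C)
    (hSC : IsCompact (S ∩ C)) (hf : ContDiffOn ℝ k f U) (hfC : Function.support f ⊆ C) :
    ∃ f' : E → F, ContDiff ℝ k f' ∧ HasCompactSupport f' ∧ ∀ p ∈ S, f' =ᶠ[nhds p] f := by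
  obtain ⟨L, hL, hSL, hLU⟩ := exists_compact_between hSC hU (Set.inter_subset_left.trans hSU)
  obtain ⟨χ, hχ_one, hχ_zero, -⟩ := exists_contMDiffMap_one_nhds_of_subset_interior (n := k)
    (modelWithCornersSelf ℝ E) hSC.isClosed hSL
  refine ⟨fun p => χ p • f p, contDiff_iff_contDiffAt.2 fun p => ?_, ?_, fun p hp => ?_⟩
  · by_cases hpL : p ∈ L
    · exact χ.contMDiff.contDiff.contDiffAt.smul (hf.contDiffAt (hU.mem_nhds (hLU hpL)))
    · refine (contDiffAt_const (c := (0 : F))).congr_of_eventuallyEq ?_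
      filter_upwards [hL.isClosed.isOpen_compl.mem_nhds hpL] with q hq
      rw [hχ_zero q hq, zero_smul]
  · exact .intro hL fun p hp => by rw [hχ_zero p hp, zero_smul]
  · by_cases hpC : p ∈ C
    · have hpSC : p ∈ S ∩ C := ⟨hp, hpC⟩
      filter_upwards [hχ_one.filter_mono (nhds_le_nhdsSet hpSC)] with q hq
      rw [hq, one_smul]
    · filter_upwards [hC.isOpen_compl.mem_nhds hpC] with q hq
      rw [Function.notMem_support.1 fun h => hq (hfC h), smul_zero]

lemma setIntegral_between_graph_and_slice_divergence_of_contDiffOn {ι : Type*} [Fintype ι]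
    {e : ℝ × E → ℝ} {P : ι → ℝ × E → ℝ} {U C : Set (ℝ × E)} {t : ℝ} (hφ : LipschitzWith K φ)
    (hU : IsOpen U) (hSU : {p : ℝ × E | φ p.2 ≤ p.1 ∧ p.1 ≤ t} ⊆ U) (hC : IsClosed C)
    (hSC : IsCompact ({p : ℝ × E | φ p.2 ≤ p.1 ∧ p.1 ≤ t} ∩ C))
    (he : ContDiffOn ℝ 1 e U) (heC : Function.support e ⊆ C)
    (hP : ∀ i, ContDiffOn ℝ 1 (P i) U) (hPC : ∀ i, Function.support (P i) ⊆ C) (w : ι → E) :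
    ∫ p in {p : ℝ × E | φ p.2 < p.1 ∧ p.1 < t},
        (fderiv ℝ e p (1, 0) - ∑ i, fderiv ℝ (P i) p (0, w i)) ∂volume.prod μ
      = (∫ x in {x | φ x < t}, e (t, x) ∂μ)
        - ∫ x in {x | φ x < t}, (e (φ x, x) + ∑ i, fderiv ℝ φ x (w i) * P i (φ x, x)) ∂μ := by
  obtain ⟨e', he', hec', hee'⟩ :=
    exists_contDiff_hasCompactSupport_eventuallyEq (k := 1) hU hSU hC hSC he heC
  choose P' hP' hPc' hPP' using fun i =>
    exists_contDiff_hasCompactSupport_eventuallyEq (k := 1) hU hSU hC hSC (hP i) (hPC i)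
  have hregion : MeasurableSet {p : ℝ × E | φ p.2 < p.1 ∧ p.1 < t} :=
    measurableSet_between_graph_and_slice hφ.continuous.measurable t
  have hbase : MeasurableSet {x | φ x < t} :=
    measurableSet_lt hφ.continuous.measurable measurable_const
  convert setIntegral_between_graph_and_slice_divergence (μ := μ) hφ he' hec' hP' hPc' t w using 1
  · refine setIntegral_congr_fun hregion fun p hp => ?_
    have hpS : p ∈ {p : ℝ × E | φ p.2 ≤ p.1 ∧ p.1 ≤ t} := ⟨hp.1.le, hp.2.le⟩
    simp only [(hee' p hpS).fderiv_eq, (hPP' _ p hpS).fderiv_eq]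
  · congr 1 <;> refine setIntegral_congr_fun hbase fun x (hx : φ x < t) => ?_
    · exact (hee' (t, x) ⟨hx.le, le_rfl⟩).eq_of_nhds.symm
    · have hxS : (φ x, x) ∈ {p : ℝ × E | φ p.2 ≤ p.1 ∧ p.1 ≤ t} := ⟨le_rfl, hx.le⟩
      simp only [(hee' _ hxS).eq_of_nhds, (hPP' _ _ hxS).eq_of_nhds]

end LipschitzGraph

lemma isCompact_between_graph_and_slice_inter_tsupport {X F : Type*} [SeminormedAddCommGroup X]
    [ProperSpace X] [Zero F] {φ : X → ℝ} (hφ : Continuous φ) (t : ℝ) {v : ℝ × X → F} {R : ℝ}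
    (hv : ∀ s x, R < ‖x‖ → v (s, x) = 0) :
    IsCompact ({p : ℝ × X | φ p.2 ≤ p.1 ∧ p.1 ≤ t} ∩ tsupport v) := by
  have htsupport : tsupport v ⊆ Prod.snd ⁻¹' Metric.closedBall 0 R :=
    closure_minimal (fun p hp => mem_closedBall_zero_iff.2 <| not_lt.1 fun h => hp (hv p.1 p.2 h))
      (Metric.isClosed_closedBall.preimage continuous_snd)
  obtain ⟨m, hm⟩ := ((isCompact_closedBall 0 R).image hφ).bddBelow
  have hclosed : IsClosed {p : ℝ × X | φ p.2 ≤ p.1 ∧ p.1 ≤ t} :=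
    (isClosed_le (hφ.comp continuous_snd) continuous_fst).inter
      (isClosed_le continuous_fst continuous_const)
  refine ((isCompact_Icc (a := m)).prod (isCompact_closedBall 0 R)).of_isClosed_subset
    (hclosed.inter (isClosed_tsupport v)) fun p hp => ⟨⟨?_, hp.1.2⟩, htsupport hp.2⟩
  exact (hm ⟨p.2, htsupport hp.2, rfl⟩).trans hp.1.1

section Energy

variable {n : ℕ}

/-- The energy density `(∂_t v)² + Σ g^{αβ} ∂_α v ∂_β v + v²` of the wave operator with spatial
coefficients `g`. -/
noncomputable def energyDensity (g : Fin n → Fin n → ℝ × (Fin n → ℝ) → ℝ)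
    (v : ℝ × (Fin n → ℝ) → ℝ) (p : ℝ × (Fin n → ℝ)) : ℝ :=
  (Dt v p) ^ 2 + (∑ α, ∑ β, g α β p * Dx α v p * Dx β v p) + (v p) ^ 2

/-- The `α`-th component of the energy flux, signed so that the energy current whose spacetime
divergence is controlled by the equation has time component `energyDensity g v` and spatial
components `-energyFlux g v α`. -/
noncomputable def energyFlux (g : Fin n → Fin n → ℝ × (Fin n → ℝ) → ℝ)
    (v : ℝ × (Fin n → ℝ) → ℝ) (α : Fin n) (p : ℝ × (Fin n → ℝ)) : ℝ :=
  2 * Dt v p * ∑ β, g α β p * Dx β v p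

lemma sum_sum_mul_swap_of_symm {ι R : Type*} [Fintype ι] [CommSemiring R] {g : ι → ι → R}
    (hg : ∀ α β, g α β = g β α) (ξ η : ι → R) :
    ∑ α, ∑ β, g α β * ξ α * η β = ∑ α, ∑ β, g α β * η α * ξ β := by
  rw [Finset.sum_comm]
  simp only [hg, mul_right_comm]

-- For `a = ∂_t v`, `ξ = ∇v`, `η = ∇φ`, the covector `ξ + a η` is the gradient of the trace of `v`
-- on the graph of `φ`.
lemma graph_energy_eq_energy_add_flux {ι R : Type*} [Fintype ι] [CommRing R] {g : ι → ι → R}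
    (hg : ∀ α β, g α β = g β α) (a c : R) (ξ η : ι → R) :
    a ^ 2 * (1 - ∑ α, ∑ β, g α β * η α * η β)
        + (∑ α, ∑ β, g α β * (ξ α + η α * a) * (ξ β + η β * a)) + c ^ 2
      = (a ^ 2 + (∑ α, ∑ β, g α β * ξ α * ξ β) + c ^ 2)
        + ∑ α, η α * (2 * a * ∑ β, g α β * ξ β) := by
  have hexpand : ∑ α, ∑ β, g α β * (ξ α + η α * a) * (ξ β + η β * a)
      = (∑ α, ∑ β, g α β * ξ α * ξ β) + a * (∑ α, ∑ β, g α β * ξ α * η β)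
        + a * (∑ α, ∑ β, g α β * η α * ξ β) + a ^ 2 * (∑ α, ∑ β, g α β * η α * η β) := by
    simp only [Finset.mul_sum, ← Finset.sum_add_distrib]
    congr! 2
    ring
  have hflux : ∑ α, η α * (2 * a * ∑ β, g α β * ξ β)
      = 2 * a * ∑ α, ∑ β, g α β * η α * ξ β := by
    simp only [Finset.mul_sum]
    congr! 2
    ring
  rw [hexpand, hflux, sum_sum_mul_swap_of_symm hg ξ η]
  ring

variable {g : Fin n → Fin n → ℝ × (Fin n → ℝ) → ℝ} {v : ℝ × (Fin n → ℝ) → ℝ}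
  {p : ℝ × (Fin n → ℝ)} {U : Set (ℝ × (Fin n → ℝ))}

lemma differentiableAt_Dt (hv : ContDiffAt ℝ 2 v p) : DifferentiableAt ℝ (Dt v) p :=
  ((hv.fderiv_right (m := 1) le_rfl).differentiableAt one_ne_zero).clm_apply
    (differentiableAt_const _)

lemma differentiableAt_Dx (hv : ContDiffAt ℝ 2 v p) (α : Fin n) :
    DifferentiableAt ℝ (Dx α v) p :=
  ((hv.fderiv_right (m := 1) le_rfl).differentiableAt one_ne_zero).clm_apply
    (differentiableAt_const _)

lemma Dt_Dx_comm (hv : ContDiffAt ℝ 2 v p) (α : Fin n) : Dt (Dx α v) p = Dx α (Dt v) p := by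
  have hfderiv : DifferentiableAt ℝ (fderiv ℝ v) p :=
    (hv.fderiv_right (m := 1) le_rfl).differentiableAt one_ne_zero
  have hsecond (d d' : ℝ × (Fin n → ℝ)) :
      fderiv ℝ (fun q => fderiv ℝ v q d) p d' = fderiv ℝ (fderiv ℝ v) p d' d := by
    simp [fderiv_clm_apply hfderiv (differentiableAt_const d)]
  exact (hsecond _ _).trans <|
    (hv.isSymmSndFDerivAt (by simp) _ _).trans (hsecond _ _).symm

lemma Dt_energyDensity (hg : ∀ α β, DifferentiableAt ℝ (g α β) p) (hsymm : ∀ α β, g α β p = g β α p)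
    (hv : ContDiffAt ℝ 2 v p) :
    Dt (energyDensity g v) p = 2 * Dt v p * Dt (Dt v) p
      + (∑ α, ∑ β, Dt (g α β) p * Dx α v p * Dx β v p)
      + 2 * (∑ α, ∑ β, g α β p * Dx α (Dt v) p * Dx β v p) + 2 * v p * Dt v p := by
  have hderiv := (((differentiableAt_Dt hv).hasFDerivAt.pow 2).add
    (HasFDerivAt.fun_sum (u := Finset.univ) fun α _ =>
      HasFDerivAt.fun_sum (u := Finset.univ) fun β _ =>
        ((hg α β).hasFDerivAt.mul (differentiableAt_Dx hv α).hasFDerivAt).mul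
          (differentiableAt_Dx hv β).hasFDerivAt)).add
    ((hv.differentiableAt two_ne_zero).hasFDerivAt.pow 2)
  have hexpand : Dt (energyDensity g v) p = 2 * Dt v p * Dt (Dt v) p
      + (∑ α, ∑ β, (Dt (g α β) p * Dx α v p * Dx β v p
        + g α β p * Dt (Dx α v) p * Dx β v p + g α β p * Dx α v p * Dt (Dx β v) p))
      + 2 * v p * Dt v p := by
    refine (congrArg (fun L => L (1, 0)) hderiv.fderiv).trans ?_
    simp only [add_apply, sum_apply, smul_apply, smul_eq_mul, nsmul_eq_mul, Nat.cast_ofNat,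
      Nat.reduceSub, pow_one, Dt, Pi.mul_apply]
    congr! 4
    ring
  rw [hexpand]
  simp only [Dt_Dx_comm hv, Finset.sum_add_distrib]
  rw [sum_sum_mul_swap_of_symm hsymm fun α => Dx α v p]
  ring

lemma Dx_energyFlux (hg : ∀ α β, DifferentiableAt ℝ (g α β) p) (hv : ContDiffAt ℝ 2 v p)
    (α : Fin n) :
    Dx α (energyFlux g v α) p = 2 * ∑ β, (g α β p * Dx α (Dt v) p * Dx β v p
      + Dx α (g α β) p * Dt v p * Dx β v p + Dt v p * (g α β p * Dx α (Dx β v) p)) := by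
  have hderiv := ((differentiableAt_Dt hv).hasFDerivAt.const_mul 2).mul
    (HasFDerivAt.fun_sum (u := Finset.univ) fun β _ =>
      (hg α β).hasFDerivAt.mul (differentiableAt_Dx hv β).hasFDerivAt)
  refine (congrArg (fun L => L (0, Pi.single α 1)) hderiv.fderiv).trans ?_
  simp only [add_apply, sum_apply, smul_apply, smul_eq_mul, Dx, Pi.mul_apply, Finset.mul_sum,
    Finset.sum_mul, ← Finset.sum_add_distrib]
  congr! 1
  ring

lemma Dt_energyDensity_sub_sum_Dx_energyFlux (hg : ∀ α β, DifferentiableAt ℝ (g α β) p)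
    (hsymm : ∀ α β, g α β p = g β α p) (hv : ContDiffAt ℝ 2 v p) :
    Dt (energyDensity g v) p - ∑ α, Dx α (energyFlux g v α) p
      = 2 * Dt v p * (Dt (Dt v) p - ∑ α, ∑ β, g α β p * Dx α (Dx β v) p)
        + (∑ α, ∑ β, Dt (g α β) p * Dx α v p * Dx β v p)
        - 2 * (∑ α, ∑ β, Dx α (g α β) p * Dt v p * Dx β v p) + 2 * v p * Dt v p := by
  simp only [Dt_energyDensity hg hsymm hv, Dx_energyFlux hg hv, ← Finset.mul_sum,
    Finset.sum_add_distrib]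
  ring

lemma contDiffOn_Dt (hU : IsOpen U) (hv : ContDiffOn ℝ 2 v U) : ContDiffOn ℝ 1 (Dt v) U :=
  (hv.fderiv_of_isOpen hU le_rfl).clm_apply contDiffOn_const

lemma contDiffOn_Dx (hU : IsOpen U) (hv : ContDiffOn ℝ 2 v U) (α : Fin n) :
    ContDiffOn ℝ 1 (Dx α v) U :=
  (hv.fderiv_of_isOpen hU le_rfl).clm_apply contDiffOn_const

lemma contDiffOn_energyDensity (hU : IsOpen U) (hg : ∀ α β, ContDiffOn ℝ 1 (g α β) U)
    (hv : ContDiffOn ℝ 2 v U) : ContDiffOn ℝ 1 (energyDensity g v) U :=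
  (((contDiffOn_Dt hU hv).pow 2).add <| .sum fun α _ => .sum fun β _ =>
    ((hg α β).mul (contDiffOn_Dx hU hv α)).mul (contDiffOn_Dx hU hv β)).add
    ((hv.of_le one_le_two).pow 2)

lemma contDiffOn_energyFlux (hU : IsOpen U) (hg : ∀ α β, ContDiffOn ℝ 1 (g α β) U)
    (hv : ContDiffOn ℝ 2 v U) (α : Fin n) : ContDiffOn ℝ 1 (energyFlux g v α) U :=
  (contDiffOn_const.mul (contDiffOn_Dt hU hv)).mul <| .sum fun β _ =>
    (hg α β).mul (contDiffOn_Dx hU hv β)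

lemma support_energyDensity_subset : Function.support (energyDensity g v) ⊆ tsupport v := by
  refine Function.support_subset_iff'.2 fun p hp => ?_
  simp [energyDensity, Dt, Dx, fderiv_of_notMem_tsupport ℝ hp, image_eq_zero_of_notMem_tsupport hp]

lemma support_energyFlux_subset (α : Fin n) :
    Function.support (energyFlux g v α) ⊆ tsupport v := by
  refine Function.support_subset_iff'.2 fun p hp => ?_
  simp [energyFlux, Dt, fderiv_of_notMem_tsupport ℝ hp]

end Energy

theorem stmt_9_general {n : ℕ} {U : Set (ℝ × (Fin n → ℝ))} (hU : IsOpen U)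
    {φ : (Fin n → ℝ) → ℝ} {K : NNReal} (hφ : LipschitzWith K φ) {t : ℝ}
    (hSU : {p : ℝ × (Fin n → ℝ) | φ p.2 ≤ p.1 ∧ p.1 ≤ t} ⊆ U)
    {g : Fin n → Fin n → ℝ × (Fin n → ℝ) → ℝ} (hg : ∀ α β, ContDiffOn ℝ 1 (g α β) U)
    (hgsymm : ∀ p ∈ U, ∀ α β, g α β p = g β α p)
    {b0 : ℝ × (Fin n → ℝ) → ℝ} {b : Fin n → ℝ × (Fin n → ℝ) → ℝ} {c f : ℝ × (Fin n → ℝ) → ℝ}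
    {v : ℝ × (Fin n → ℝ) → ℝ} (hv : ContDiffOn ℝ 2 v U)
    (hsupp : IsCompact ({p : ℝ × (Fin n → ℝ) | φ p.2 ≤ p.1 ∧ p.1 ≤ t} ∩ tsupport v))
    (heq : ∀ p : ℝ × (Fin n → ℝ), φ p.2 < p.1 → p.1 < t →
      Dt (Dt v) p - (∑ α, ∑ β, g α β p * Dx α (Dx β v) p)
        + b0 p * Dt v p + (∑ α, b α p * Dx α v p) + c p * v p = f p) :
    (∫ x in {x : Fin n → ℝ | φ x < t},
        ((Dt v (t, x)) ^ 2
          + (∑ α, ∑ β, g α β (t, x) * Dx α v (t, x) * Dx β v (t, x))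
          + (v (t, x)) ^ 2))
      = (∫ x in {x : Fin n → ℝ | φ x < t},
          ((Dt v (φ x, x)) ^ 2 *
              (1 - ∑ α, ∑ β, g α β (φ x, x) * fderiv ℝ φ x (Pi.single α 1)
                * fderiv ℝ φ x (Pi.single β 1))
            + (∑ α, ∑ β, g α β (φ x, x)
                * (Dx α v (φ x, x) + fderiv ℝ φ x (Pi.single α 1) * Dt v (φ x, x))
                * (Dx β v (φ x, x) + fderiv ℝ φ x (Pi.single β 1) * Dt v (φ x, x)))
            + (v (φ x, x)) ^ 2))
        - ∫ p in {p : ℝ × (Fin n → ℝ) | φ p.2 < p.1 ∧ p.1 < t},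
            (2 * Dt v p * (b0 p * Dt v p + (∑ α, b α p * Dx α v p) + c p * v p)
              + 2 * (∑ α, ∑ β, Dx α (g α β) p * Dt v p * Dx β v p)
              - (∑ α, ∑ β, Dt (g α β) p * Dx α v p * Dx β v p)
              - 2 * v p * Dt v p - 2 * f p * Dt v p) := by
  have hregion : MeasurableSet {p : ℝ × (Fin n → ℝ) | φ p.2 < p.1 ∧ p.1 < t} :=
    measurableSet_between_graph_and_slice hφ.continuous.measurable t
  have hbase : MeasurableSet {x | φ x < t} :=
    measurableSet_lt hφ.continuous.measurable measurable_const
  have hsource (p : ℝ × (Fin n → ℝ)) (hp : φ p.2 < p.1 ∧ p.1 < t) :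
      2 * Dt v p * (b0 p * Dt v p + (∑ α, b α p * Dx α v p) + c p * v p)
        + 2 * (∑ α, ∑ β, Dx α (g α β) p * Dt v p * Dx β v p)
        - (∑ α, ∑ β, Dt (g α β) p * Dx α v p * Dx β v p)
        - 2 * v p * Dt v p - 2 * f p * Dt v p
      = -(Dt (energyDensity g v) p - ∑ α, Dx α (energyFlux g v α) p) := by
    have hUp : U ∈ nhds p := hU.mem_nhds (hSU ⟨hp.1.le, hp.2.le⟩)
    rw [Dt_energyDensity_sub_sum_Dx_energyFlux
      (fun α β => ((hg α β).contDiffAt hUp).differentiableAt one_ne_zero)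
      (hgsymm p (mem_of_mem_nhds hUp)) (hv.contDiffAt hUp), ← heq p hp.1 hp.2]
    ring
  have hgraph (x : Fin n → ℝ) (hx : φ x < t) :=
    graph_energy_eq_energy_add_flux (hgsymm (φ x, x) (hSU ⟨le_rfl, hx.le⟩)) (Dt v (φ x, x))
      (v (φ x, x)) (fun α => Dx α v (φ x, x)) fun α => fderiv ℝ φ x (Pi.single α 1)
  have hbalance := setIntegral_between_graph_and_slice_divergence_of_contDiffOn (μ := volume) hφ hU
    hSU (isClosed_tsupport v) hsupp (contDiffOn_energyDensity hU hg hv) support_energyDensity_subset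
    (contDiffOn_energyFlux hU hg hv) support_energyFlux_subset fun α => Pi.single α 1
  rw [setIntegral_congr_fun hregion hsource, setIntegral_congr_fun hbase hgraph, integral_neg,
    sub_neg_eq_add]
  exact (eq_sub_iff_add_eq'.1 hbalance).symm

/-- Energy balance identity between the Lipschitz graph hypersurface
`Σ = {(φ(x),x)}` and a later time slice `{t} × D_t`, `D_t = {x : φ(x) < t}`, obtained
by integrating the energy density identity over the future region
`{(s,x) : φ(x) < s < t}`. -/
theorem stmt_9 (n : ℕ) (hn : 1 ≤ n) (T : ℝ) (hT : 0 < T)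
    (U : Set (ℝ × (Fin n → ℝ))) (hU : IsOpen U)
    (hUsub : Set.Icc (-T) T ×ˢ (Set.univ : Set (Fin n → ℝ)) ⊆ U)
    (g : Fin n → Fin n → ℝ × (Fin n → ℝ) → ℝ)
    (hg : ∀ α β, ContDiffOn ℝ 1 (g α β) U)
    (hgsymm : ∀ α β p, g α β p = g β α p)
    (hgpos : ∀ p ∈ U, ∀ ξ : Fin n → ℝ, ξ ≠ 0 → 0 < ∑ α, ∑ β, g α β p * ξ α * ξ β)
    (φ : (Fin n → ℝ) → ℝ) (hφ : ∃ K : NNReal, LipschitzWith K φ)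
    (hφT : ∀ x, -T < φ x ∧ φ x < T)
    (b0 : ℝ × (Fin n → ℝ) → ℝ) (b : Fin n → ℝ × (Fin n → ℝ) → ℝ)
    (c f : ℝ × (Fin n → ℝ) → ℝ)
    (hb0 : ContinuousOn b0 (Set.Icc (-T) T ×ˢ (Set.univ : Set (Fin n → ℝ))))
    (hb : ∀ α, ContinuousOn (b α) (Set.Icc (-T) T ×ˢ (Set.univ : Set (Fin n → ℝ))))
    (hc : ContinuousOn c (Set.Icc (-T) T ×ˢ (Set.univ : Set (Fin n → ℝ))))
    (hf : ContinuousOn f (Set.Icc (-T) T ×ˢ (Set.univ : Set (Fin n → ℝ))))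
    (v : ℝ × (Fin n → ℝ) → ℝ) (hv : ContDiffOn ℝ 2 v U)
    (hsupp : ∃ R : ℝ, 0 < R ∧ ∀ (t : ℝ) (x : Fin n → ℝ), R ≤ ‖x‖ → v (t, x) = 0)
    (heq : ∀ p ∈ Set.Icc (-T) T ×ˢ (Set.univ : Set (Fin n → ℝ)),
      Dt (Dt v) p - (∑ α, ∑ β, g α β p * Dx α (Dx β v) p)
        + b0 p * Dt v p + (∑ α, b α p * Dx α v p) + c p * v p = f p) :
    ∀ t : ℝ, -T < t → t ≤ T →
    (∫ x in {x : Fin n → ℝ | φ x < t},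
        ((Dt v (t, x)) ^ 2
          + (∑ α, ∑ β, g α β (t, x) * Dx α v (t, x) * Dx β v (t, x))
          + (v (t, x)) ^ 2))
      = (∫ x in {x : Fin n → ℝ | φ x < t},
          ((Dt v (φ x, x)) ^ 2 *
              (1 - ∑ α, ∑ β, g α β (φ x, x) * fderiv ℝ φ x (Pi.single α 1)
                * fderiv ℝ φ x (Pi.single β 1))
            + (∑ α, ∑ β, g α β (φ x, x)
                * (Dx α v (φ x, x) + fderiv ℝ φ x (Pi.single α 1) * Dt v (φ x, x))
                * (Dx β v (φ x, x) + fderiv ℝ φ x (Pi.single β 1) * Dt v (φ x, x)))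
            + (v (φ x, x)) ^ 2))
        - ∫ p in {p : ℝ × (Fin n → ℝ) | φ p.2 < p.1 ∧ p.1 < t},
            (2 * Dt v p * (b0 p * Dt v p + (∑ α, b α p * Dx α v p) + c p * v p)
              + 2 * (∑ α, ∑ β, Dx α (g α β) p * Dt v p * Dx β v p)
              - (∑ α, ∑ β, Dt (g α β) p * Dx α v p * Dx β v p)
              - 2 * v p * Dt v p - 2 * f p * Dt v p) := by
  intro t _ htT
  obtain ⟨K, hφ⟩ := hφ
  obtain ⟨R, -, hR⟩ := hsupp
  have hstrip {p : ℝ × (Fin n → ℝ)} (hp : φ p.2 ≤ p.1) (hpt : p.1 ≤ t) :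
      p ∈ Set.Icc (-T) T ×ˢ (Set.univ : Set (Fin n → ℝ)) :=
    ⟨⟨(hφT p.2).1.le.trans hp, hpt.trans htT⟩, trivial⟩
  exact stmt_9_general hU hφ (fun p hp => hUsub (hstrip hp.1 hp.2)) hg
    (fun p _ α β => hgsymm α β p) hv
    (isCompact_between_graph_and_slice_inter_tsupport hφ.continuous t fun s x hx => hR s x hx.le)
    fun p hp hpt => heq p (hstrip hp.le hpt.le)
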